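/- Let p ≥ 1, set n = 2p, let Λ be a full-rank lattice in ℝⁿ, let α, α', β, β' > 0 be reals and let c be a nonzero real. Then Spec(Λ,α,β,p) = Spec(cΛ,α',β',p) (as functions ℝ → ℕ) if and only if {α', β'} = {c²α, c²β} as unordered pairs, where cΛ := {c·w : w ∈ Λ} is the rescaled lattice. -/

import Mathlib

open Real
open scoped RealInnerProductSpace

/-- The dual lattice `Λ* = {v : ∀ w ∈ Λ, ⟨v,w⟩ ∈ ℤ}` of a lattice `Λ ⊆ ℝⁿ`. -/
def dualLattice {n : ℕ} (L : Submodule ℤ (EuclideanSpace ℝ (Fin n))) :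
    Set (EuclideanSpace ℝ (Fin n)) :=
  {v | ∀ w ∈ L, ∃ m : ℤ, ⟪v, w⟫ = (m : ℝ)}

/-- The spectrum, with multiplicities, of the generalized Hodge-Laplace operator
`F_{αβ} = α dδ + β δd` on `p`-forms on the flat torus `ℝⁿ/Λ` (Theorem 3.9):
`x ↦ C(n-1,p-1)·#{l ∈ Λ* : 4π²α‖l‖² = x} + C(n-1,p)·#{l ∈ Λ* : 4π²β‖l‖² = x}`. -/
noncomputable def torusSpec {n : ℕ} (L : Submodule ℤ (EuclideanSpace ℝ (Fin n)))
    (α β : ℝ) (p : ℕ) : ℝ → ℕ := fun x =>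
  (n - 1).choose (p - 1) *
      Nat.card {l : EuclideanSpace ℝ (Fin n) //
        l ∈ dualLattice L ∧ 4 * π ^ 2 * α * ‖l‖ ^ 2 = x} +
    (n - 1).choose p *
      Nat.card {l : EuclideanSpace ℝ (Fin n) //
        l ∈ dualLattice L ∧ 4 * π ^ 2 * β * ‖l‖ ^ 2 = x}

/-- The rescaled lattice `cΛ = {c·w : w ∈ Λ}`. -/
noncomputable def rescaleLattice {n : ℕ} (c : ℝ) (L : Submodule ℤ (EuclideanSpace ℝ (Fin n))) :
    Submodule ℤ (EuclideanSpace ℝ (Fin n)) :=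
  L.map ((c • (LinearMap.id : EuclideanSpace ℝ (Fin n) →ₗ[ℝ]
    EuclideanSpace ℝ (Fin n))).restrictScalars ℤ)


/-- Number of dual lattice vectors of squared norm `t`. -/
noncomputable def dualCount {n : ℕ} (L : Submodule ℤ (EuclideanSpace ℝ (Fin n))) (t : ℝ) : ℕ :=
  Nat.card {l : EuclideanSpace ℝ (Fin n) // l ∈ dualLattice L ∧ ‖l‖ ^ 2 = t}

lemma card_eq_dualCount {n : ℕ} (L : Submodule ℤ (EuclideanSpace ℝ (Fin n))) (a x : ℝ)
    (ha : 0 < a) :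
    Nat.card {l : EuclideanSpace ℝ (Fin n) // l ∈ dualLattice L ∧ 4 * π ^ 2 * a * ‖l‖ ^ 2 = x}
      = dualCount L (x / (4 * π ^ 2) / a) := by
  unfold dualCount
  have hpi := Real.pi_pos
  refine Nat.card_congr (Equiv.subtypeEquivRight fun l => and_congr_right fun _ => ?_)
  rw [div_div, eq_div_iff (by positivity), mul_comm]

lemma mem_dual_rescale {n : ℕ} (L : Submodule ℤ (EuclideanSpace ℝ (Fin n))) (c : ℝ)
    (l : EuclideanSpace ℝ (Fin n)) :
    l ∈ dualLattice (rescaleLattice c L) ↔ c • l ∈ dualLattice L := by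
  simp [dualLattice, rescaleLattice, inner_smul_left, inner_smul_right]

lemma dualCount_rescale {n : ℕ} (L : Submodule ℤ (EuclideanSpace ℝ (Fin n))) (c : ℝ)
    (hc : c ≠ 0) (t : ℝ) :
    dualCount (rescaleLattice c L) t = dualCount L (c ^ 2 * t) := by
  unfold dualCount
  refine Nat.card_congr (Equiv.subtypeEquiv (Equiv.smulRight hc) fun l => ?_)
  rw [mem_dual_rescale]
  refine and_congr_right fun _ => ?_
  simp [norm_smul, mul_pow, hc]

lemma dual_eq_span {n : ℕ} (L : Submodule ℤ (EuclideanSpace ℝ (Fin n)))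
    [DiscreteTopology L] [IsZLattice ℝ L] :
    ∃ b : Module.Basis (Module.Free.ChooseBasisIndex ℤ L) ℝ (EuclideanSpace ℝ (Fin n)),
      dualLattice L = (Submodule.span ℤ (Set.range b) : Set (EuclideanSpace ℝ (Fin n))) := by
  classical
  let b0 := Module.Free.chooseBasis ℤ L
  let b := b0.ofZLatticeBasis ℝ L
  have hspan : Submodule.span ℤ (Set.range b) = L := b0.ofZLatticeBasis_span ℝ L
  let B : LinearMap.BilinForm ℝ (EuclideanSpace ℝ (Fin n)) := innerₗ _
  have hB : B.Nondegenerate := by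
    constructor
    · intro x hx
      exact inner_self_eq_zero.1 (hx x)
    · intro x hx
      exact inner_self_eq_zero.1 (hx x)
  refine ⟨B.dualBasis hB b, ?_⟩
  rw [← B.dualSubmodule_span_of_basis (R := ℤ) hB b, hspan]
  ext v
  simp only [dualLattice, Set.mem_setOf_eq, SetLike.mem_coe, LinearMap.BilinForm.mem_dualSubmodule,
    Submodule.mem_one]
  refine forall₂_congr fun w _ => ?_
  simp [B, eq_comm]

lemma dual_finite {n : ℕ} (L : Submodule ℤ (EuclideanSpace ℝ (Fin n)))
    [DiscreteTopology L] [IsZLattice ℝ L] (r : ℝ) :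
    {l | l ∈ dualLattice L ∧ ‖l‖ ^ 2 ≤ r}.Finite := by
  obtain ⟨b, hb⟩ := dual_eq_span L
  have hs : Bornology.IsBounded {l : EuclideanSpace ℝ (Fin n) | ‖l‖ ^ 2 ≤ r} := by
    refine (Metric.isBounded_closedBall (x := 0) (r := √r)).subset fun l hl => ?_
    rw [mem_closedBall_zero_iff]
    exact Real.le_sqrt_of_sq_le hl
  refine (ZSpan.setFinite_inter b hs).subset ?_
  rintro l ⟨h1, h2⟩
  rw [hb] at h1
  exact ⟨h2, h1⟩

lemma exists_min {n : ℕ} (hn : 0 < n) (L : Submodule ℤ (EuclideanSpace ℝ (Fin n)))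
    [DiscreteTopology L] [IsZLattice ℝ L] :
    ∃ m : ℝ, 0 < m ∧ dualCount L m ≠ 0 ∧ ∀ t, 0 < t → t < m → dualCount L t = 0 := by
  obtain ⟨b, hb⟩ := dual_eq_span L
  haveI : Nonempty (Fin n) := ⟨⟨0, hn⟩⟩
  haveI : Nonempty (Module.Free.ChooseBasisIndex ℤ L) := b.index_nonempty
  obtain ⟨i⟩ := this
  have hl0 : b i ∈ dualLattice L := by
    rw [hb]; exact Submodule.subset_span ⟨i, rfl⟩
  let S := {l | l ∈ dualLattice L ∧ ‖l‖ ^ 2 ≤ ‖b i‖ ^ 2} \ {0}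
  have hS : S.Finite := (dual_finite L _).subset Set.diff_subset
  obtain ⟨l, ⟨⟨hl1, hl2⟩, hl3⟩, hmin⟩ := S.exists_min_image (fun l => ‖l‖ ^ 2) hS
    ⟨b i, ⟨hl0, le_rfl⟩, b.ne_zero i⟩
  have hl3' : l ≠ 0 := hl3
  refine ⟨‖l‖ ^ 2, by positivity, ?_, ?_⟩
  · unfold dualCount
    have hf : {k | k ∈ dualLattice L ∧ ‖k‖ ^ 2 = ‖l‖ ^ 2}.Finite :=
      (dual_finite L (‖l‖ ^ 2)).subset fun k hk => ⟨hk.1, hk.2.le⟩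
    haveI := hf.to_subtype
    exact Nat.card_ne_zero.2 ⟨⟨⟨l, hl1, rfl⟩⟩, this⟩
  · intro t ht htm
    unfold dualCount
    haveI : IsEmpty {k : EuclideanSpace ℝ (Fin n) // k ∈ dualLattice L ∧ ‖k‖ ^ 2 = t} := by
      refine ⟨fun ⟨k, hk, hkt⟩ => ?_⟩
      have hk0 : k ≠ 0 := by
        rintro rfl
        simp at hkt
        exact ht.ne hkt
      have := hmin k ⟨⟨hk, by linarith⟩, hk0⟩
      linarith
    exact Nat.card_of_isEmpty

section abstract
variable {N : ℝ → ℕ} {m : ℝ}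

lemma not_lt_min (hm : 0 < m) (h0 : N m ≠ 0) (h1 : ∀ t, 0 < t → t < m → N t = 0)
    {a b c d : ℝ} (ha : 0 < a) (hac : a < c) (had : a < d)
    (h : ∀ x, N (x / a) + N (x / b) = N (x / c) + N (x / d)) : False := by
  have hx := h (m * a)
  rw [mul_div_cancel_right₀ _ ha.ne'] at hx
  have key : ∀ e, a < e → N (m * a / e) = 0 := fun e he => by
    have he0 : 0 < e := ha.trans he
    refine h1 _ (by positivity) ?_
    rw [div_lt_iff₀ he0]
    exact mul_lt_mul_of_pos_left he hm
  rw [key c hac, key d had] at hx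
  omega

lemma pair_sorted (hm : 0 < m) (h0 : N m ≠ 0) (h1 : ∀ t, 0 < t → t < m → N t = 0)
    {a b c d : ℝ} (ha : 0 < a) (hc : 0 < c) (hab : a ≤ b) (hcd : c ≤ d)
    (h : ∀ x, N (x / a) + N (x / b) = N (x / c) + N (x / d)) : a = c ∧ b = d := by
  have hac : a = c := by
    rcases lt_trichotomy a c with hl | hl | hl
    · exact (not_lt_min hm h0 h1 ha hl (hl.trans_le hcd) h).elim
    · exact hl
    · exact (not_lt_min hm h0 h1 hc hl (hl.trans_le hab) fun x => (h x).symm).elim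
  subst hac
  refine ⟨rfl, ?_⟩
  have h' : ∀ x, N (x / b) = N (x / d) := fun x => by have := h x; omega
  rcases lt_trichotomy b d with hl | hl | hl
  · exact (not_lt_min (b := b) hm h0 h1 (ha.trans_le hab) hl hl
      fun x => by rw [h' x]).elim
  · exact hl
  · exact (not_lt_min (b := d) hm h0 h1 (ha.trans_le hcd) hl hl
      fun x => by rw [h' x]).elim

lemma pair_eq (hm : 0 < m) (h0 : N m ≠ 0) (h1 : ∀ t, 0 < t → t < m → N t = 0)
    {a b c d : ℝ} (ha : 0 < a) (hb : 0 < b) (hc : 0 < c) (hd : 0 < d)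
    (h : ∀ x, N (x / a) + N (x / b) = N (x / c) + N (x / d)) :
    (c = a ∧ d = b) ∨ (c = b ∧ d = a) := by
  rcases le_total a b with hab | hab <;> rcases le_total c d with hcd | hcd
  · have := pair_sorted hm h0 h1 ha hc hab hcd h
    exact Or.inl ⟨this.1.symm, this.2.symm⟩
  · have := pair_sorted hm h0 h1 ha hd hab hcd fun x => by rw [h x, add_comm]
    exact Or.inr ⟨this.2.symm, this.1.symm⟩
  · have := pair_sorted hm h0 h1 hb hc hab hcd fun x => by rw [← h x, add_comm]
    exact Or.inr ⟨this.1.symm, this.2.symm⟩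
  · have := pair_sorted hm h0 h1 hb hd hab hcd fun x => by rw [add_comm, h x, add_comm]
    exact Or.inl ⟨this.2.symm, this.1.symm⟩
end abstract

/-- Corollary 3.19 (case `n = 2p`): `F_{αβ,p}` on `ℝⁿ/Λ` and `F_{α'β',p}` on `ℝⁿ/cΛ` are
isospectral iff `{α', β'} = {c²α, c²β}` as unordered pairs. -/
theorem stmt_11 (p : ℕ) (hp : 1 ≤ p)
    (L : Submodule ℤ (EuclideanSpace ℝ (Fin (2 * p))))
    [DiscreteTopology L] [IsZLattice ℝ L]
    (α α' β β' : ℝ) (hα : 0 < α) (hα' : 0 < α') (hβ : 0 < β) (hβ' : 0 < β')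
    (c : ℝ) (hc : c ≠ 0) :
    torusSpec L α β p = torusSpec (rescaleLattice c L) α' β' p ↔
      ((α' = c ^ 2 * α ∧ β' = c ^ 2 * β) ∨ (α' = c ^ 2 * β ∧ β' = c ^ 2 * α)) := by
  have hpi := Real.pi_pos
  have hc2 : 0 < c ^ 2 := by positivity
  have hch : (2 * p - 1).choose (p - 1) = (2 * p - 1).choose p := by
    rw [← Nat.choose_symm (show p ≤ 2 * p - 1 by omega)]
    congr 1
    omega
  have hpos : 0 < (2 * p - 1).choose p := Nat.choose_pos (by omega)
  have hresc : ∀ y a : ℝ, c ^ 2 * (y / a) = y / (a / c ^ 2) := fun y a => by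
    rw [div_div_eq_mul_div]; ring
  have key : torusSpec L α β p = torusSpec (rescaleLattice c L) α' β' p ↔
      ∀ x, dualCount L (x / α) + dualCount L (x / β) =
        dualCount L (x / (α' / c ^ 2)) + dualCount L (x / (β' / c ^ 2)) := by
    rw [funext_iff]
    simp only [torusSpec, card_eq_dualCount _ _ _ hα, card_eq_dualCount _ _ _ hβ,
      card_eq_dualCount _ _ _ hα', card_eq_dualCount _ _ _ hβ', dualCount_rescale _ _ hc, hch,
      ← mul_add, Nat.mul_right_inj hpos.ne', hresc]
    constructor
    · intro h x
      have := h (x * (4 * π ^ 2))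
      rwa [mul_div_cancel_right₀ _ (by positivity)] at this
    · intro h x
      exact h _
  have e : ∀ u v : ℝ, u = c ^ 2 * v ↔ u / c ^ 2 = v := fun u v => by
    rw [div_eq_iff hc2.ne', mul_comm]
  rw [key, e, e, e, e]
  constructor
  · intro h
    obtain ⟨m, hm, h0, h1⟩ := exists_min (by omega) L
    exact pair_eq hm h0 h1 hα hβ (by positivity) (by positivity) h
  · rintro (⟨h1, h2⟩ | ⟨h1, h2⟩) x
    · rw [h1, h2]
    · rw [h1, h2, add_comm]
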